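/- arXiv:2003.04444 — 6 statements merged into one kernel-verified Lean document; each statement's English description precedes it below -/
import Mathlib

section
/- Let N be a positive integer, h > 0, and for each i ∈ ZMod N let H̃_i : ℝ² → ℝ be differentiable with partial derivatives ∂₁H̃_i and ∂₂H̃_i. For all grid functions U, M, W : ZMod N → ℝ, the discrete transport operator satisfies the summation-by-parts identity ∑_{i ∈ ZMod N} 𝒯_i(U, M) · W_i = − ∑_{i ∈ ZMod N} M_i · ( ∂₁H̃_i([∇_h U]_i) · (D W)_i + ∂₂H̃_i([∇_h U]_i) · (D W)_{i−1} ). In particular, the map M ↦ −𝒯(U, M) is the adjoint of the linearization of the discrete Hamilton–Jacobi operator U ↦ H̃_i([∇_h U]_i). -/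
/-! On the cyclic group `ZMod N` a sum is invariant under translating its index, so no boundary
terms appear. In the sum of `𝒯_i(U, M) W_i` the term with `M (i - 1)` is translated by `+1` and
the term with `M (i + 1)` by `-1`; both shifts then fall on `W`, and the differences of `W` that
result are `-h` times `D W` at `i` and at `i - 1`. -/

noncomputable section

/-- Forward difference operator on periodic grid functions. -/
def Dop (N : ℕ) (h : ℝ) (W : ZMod N → ℝ) (i : ZMod N) : ℝ := (W (i + 1) - W i) / h

/-- Discrete gradient `[∇_h W]_i = ((D W)_i, (D W)_{i-1})`. -/
def gradh (N : ℕ) (h : ℝ) (W : ZMod N → ℝ) (i : ZMod N) : ℝ × ℝ :=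
  (Dop N h W i, Dop N h W (i - 1))

/-- First partial derivative of a function on `ℝ²`. -/
def dH1 (Ht : ℝ × ℝ → ℝ) (p : ℝ × ℝ) : ℝ := fderiv ℝ Ht p (1, 0)

/-- Second partial derivative of a function on `ℝ²`. -/
def dH2 (Ht : ℝ × ℝ → ℝ) (p : ℝ × ℝ) : ℝ := fderiv ℝ Ht p (0, 1)

/-- Discrete transport operator `𝒯_i(U, M)`. -/
def Ttrans (N : ℕ) (h : ℝ) (Ht : ZMod N → ℝ × ℝ → ℝ) (U M : ZMod N → ℝ)
    (i : ZMod N) : ℝ :=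
  (1 / h) *
    ( M i * dH1 (Ht i) (gradh N h U i)
      - M (i - 1) * dH1 (Ht (i - 1)) (gradh N h U (i - 1))
      + M (i + 1) * dH2 (Ht (i + 1)) (gradh N h U (i + 1))
      - M i * dH2 (Ht i) (gradh N h U i) )

/-- Summation-by-parts identity for the discrete transport operator:
`∑ i, 𝒯_i(U, M) W_i = - ∑ i, M_i (∂₁H̃_i([∇_h U]_i) (D W)_i + ∂₂H̃_i([∇_h U]_i) (D W)_{i-1})`,
i.e. `M ↦ -𝒯(U, M)` is the adjoint of the linearization of
`U ↦ H̃_i([∇_h U]_i)`. -/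
theorem transport_summation_by_parts (N : ℕ) [NeZero N] (h : ℝ) (hh : 0 < h)
    (Ht : ZMod N → ℝ × ℝ → ℝ) (hdiff : ∀ i, Differentiable ℝ (Ht i))
    (U M W : ZMod N → ℝ) :
    ∑ i : ZMod N, Ttrans N h Ht U M i * W i
      = - ∑ i : ZMod N, M i *
          ( dH1 (Ht i) (gradh N h U i) * Dop N h W i
            + dH2 (Ht i) (gradh N h U i) * Dop N h W (i - 1) ) := by
  -- The fluxes of mass, through which alone `M` and `Ht` enter.
  set F : ZMod N → ℝ := fun i => M i * dH1 (Ht i) (gradh N h U i) with hF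
  set G : ZMod N → ℝ := fun i => M i * dH2 (Ht i) (gradh N h U i) with hG
  have shiftF : ∑ i, F (i - 1) * W i = ∑ i, F i * W (i + 1) :=
    Fintype.sum_equiv (Equiv.subRight 1) _ _ fun i => by simp
  have shiftG : ∑ i, G (i + 1) * W i = ∑ i, G i * W (i - 1) :=
    Fintype.sum_equiv (Equiv.addRight 1) _ _ fun i => by simp
  calc ∑ i, Ttrans N h Ht U M i * W i
      = (1 / h) * (∑ i, F i * W i - ∑ i, F (i - 1) * W i
          + ∑ i, G (i + 1) * W i - ∑ i, G i * W i) := by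
        rw [← Finset.sum_sub_distrib, ← Finset.sum_add_distrib, ← Finset.sum_sub_distrib,
          Finset.mul_sum]
        refine Finset.sum_congr rfl fun i _ => ?_
        simp only [Ttrans, hF, hG]
        ring
    _ = (1 / h) * (∑ i, F i * W i - ∑ i, F i * W (i + 1)
          + ∑ i, G i * W (i - 1) - ∑ i, G i * W i) := by rw [shiftF, shiftG]
    _ = _ := by
        rw [← Finset.sum_sub_distrib, ← Finset.sum_add_distrib, ← Finset.sum_sub_distrib,
          Finset.mul_sum, ← Finset.sum_neg_distrib]
        refine Finset.sum_congr rfl fun i _ => ?_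
        simp only [Dop, hF, hG, sub_add_cancel]
        ring
end
end

section
/- Let N_T, N_h be positive integers, Δt > 0, h = 1/N_h, ν ∈ ℝ. Define A : ℳ → 𝒰 by (A M)^n_i = (M^{n+1}_i − M^n_i)/Δt − ν (Δ_h M^{n+1})_i for 0 ≤ n ≤ N_T − 1, and define A* : 𝒰 → ℳ by (A* U)^0_i = −U^0_i/Δt; (A* U)^n_i = (U^{n−1}_i − U^n_i)/Δt − ν (Δ_h U^{n−1})_i for 1 ≤ n ≤ N_T − 1; and (A* U)^{N_T}_i = U^{N_T−1}_i/Δt − ν (Δ_h U^{N_T−1})_i. Then ⟨A M, U⟩_𝒰 = ⟨M, A* U⟩_ℳ for all M ∈ ℳ and U ∈ 𝒰, i.e. A* is the adjoint of A. -/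
/-!
The discrete Laplacian is symmetric on the periodic grid, because translation by `1` permutes
`ZMod Nh` (`sum_lapl_mul`). Splitting the time difference, `A M` pairs `U^n` with `M^{n+1}` through
`1/Δt - ν Δ_h` and with `M^n` through `-1/Δt`. Dually, `A* U` is the difference of the
right-shifted sequence `U^{n-1}/Δt - ν Δ_h U^{n-1}` and `U^n/Δt`, both extended by zero outside
their range (`opAstar_eq`); the boundary cases of `A*` are exactly these extensions. Summation by
parts in time then amounts to dropping the zero end terms.
-/

noncomputable section

/-- Discrete Laplacian with periodic boundary conditions,
`(Δ_h W)_i = (W_{i+1} - 2W_i + W_{i-1})/h²`. -/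
def lapl (Nh : ℕ) (h : ℝ) (W : ZMod Nh → ℝ) (i : ZMod Nh) : ℝ :=
  (W (i + 1) - 2 * W i + W (i - 1)) / h ^ 2

/-- The operator `A : ℳ → 𝒰`,
`(A M)^n_i = (M^{n+1}_i - M^n_i)/Δt - ν (Δ_h M^{n+1})_i`. -/
def opA (NT Nh : ℕ) (dt ν h : ℝ) (M : Fin (NT + 1) → ZMod Nh → ℝ)
    (n : Fin NT) (i : ZMod Nh) : ℝ :=
  (M n.succ i - M n.castSucc i) / dt - ν * lapl Nh h (M n.succ) i

/-- The operator `A* : 𝒰 → ℳ`. -/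
def opAstar (NT Nh : ℕ) (dt ν h : ℝ) (U : Fin NT → ZMod Nh → ℝ)
    (n : Fin (NT + 1)) (i : ZMod Nh) : ℝ :=
  if h0 : (n : ℕ) = 0 then
    if hpos : 0 < NT then -(U ⟨0, hpos⟩ i) / dt else 0
  else if hlt : (n : ℕ) < NT then
    (U ⟨(n : ℕ) - 1, by omega⟩ i - U ⟨(n : ℕ), hlt⟩ i) / dt
      - ν * lapl Nh h (U ⟨(n : ℕ) - 1, by omega⟩) i
  else
    if hpos : 0 < NT then
      U ⟨NT - 1, by omega⟩ i / dt - ν * lapl Nh h (U ⟨NT - 1, by omega⟩) i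
    else 0

/-- Symmetry of the periodic discrete Laplacian. -/
lemma sum_lapl_mul (Nh : ℕ) [NeZero Nh] (h : ℝ) (V W : ZMod Nh → ℝ) :
    ∑ i, lapl Nh h V i * W i = ∑ i, V i * lapl Nh h W i := by
  have h1 : ∑ i, V (i + 1) * W i = ∑ i, V i * W (i - 1) :=
    Fintype.sum_equiv (Equiv.addRight 1) _ _ (by intro i; simp)
  have h2 : ∑ i, V i * W (i + 1) = ∑ i, V (i - 1) * W i :=
    Fintype.sum_equiv (Equiv.addRight 1) _ _ (by intro i; simp)
  have e : ∀ i, lapl Nh h V i * W i - V i * lapl Nh h W i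
      = ((V (i + 1) * W i - V i * W (i - 1)) - (V i * W (i + 1) - V (i - 1) * W i)) / h ^ 2 := by
    intro i; unfold lapl; ring
  rw [← sub_eq_zero, ← Finset.sum_sub_distrib, Finset.sum_congr rfl fun i _ => e i,
    ← Finset.sum_div, Finset.sum_sub_distrib, Finset.sum_sub_distrib, Finset.sum_sub_distrib,
    h1, h2]
  simp

/-- The three cases of `A*` in one formula: a right-shifted term, extended by zero at the initial
time, minus an unshifted term, extended by zero at the final time. -/
lemma opAstar_eq (NT Nh : ℕ) (hNT : 0 < NT) (dt ν h : ℝ) (U : Fin NT → ZMod Nh → ℝ)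
    (n : Fin (NT + 1)) (i : ZMod Nh) :
    opAstar NT Nh dt ν h U n i
      = Fin.cases (motive := fun _ => ℝ) 0 (fun k => U k i / dt - ν * lapl Nh h (U k) i) n
        - Fin.lastCases (motive := fun _ => ℝ) 0 (fun k => U k i / dt) n := by
  obtain ⟨m, rfl⟩ : ∃ m, NT = m + 1 := ⟨NT - 1, by omega⟩
  induction n using Fin.cases with
  | zero =>
    have h0 : (0 : Fin (m + 1 + 1)) = Fin.castSucc (0 : Fin (m + 1)) := rfl
    rw [Fin.cases_zero, h0, Fin.lastCases_castSucc]
    simp [opAstar, neg_div]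
  | succ k =>
    rw [Fin.cases_succ]
    induction k using Fin.lastCases with
    | last =>
      rw [Fin.succ_last, Fin.lastCases_last]
      simp [opAstar, Fin.last]
    | cast k =>
      rw [Fin.succ_castSucc, Fin.lastCases_castSucc]
      have hk : (k : ℕ) + 1 < m + 1 := by omega
      have e1 : (⟨(k : ℕ), by omega⟩ : Fin (m + 1)) = k.castSucc := rfl
      have e2 : (⟨(k : ℕ) + 1, hk⟩ : Fin (m + 1)) = k.succ := rfl
      simp [opAstar, e1, e2]
      ring

/-- `⟨A M, U⟩_𝒰 = ⟨M, A* U⟩_ℳ` : `A*` is the adjoint of `A`. -/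
theorem opAstar_adjoint (NT Nh : ℕ) (hNT : 0 < NT) [NeZero Nh]
    (dt h ν : ℝ) (hdt : 0 < dt) (hh0 : h = 1 / (Nh : ℝ))
    (M : Fin (NT + 1) → ZMod Nh → ℝ) (U : Fin NT → ZMod Nh → ℝ) :
    ∑ n : Fin NT, ∑ i : ZMod Nh, opA NT Nh dt ν h M n i * U n i
      = ∑ n : Fin (NT + 1), ∑ i : ZMod Nh, M n i * opAstar NT Nh dt ν h U n i := by
  have hR : ∀ i, ∑ n, M n i * opAstar NT Nh dt ν h U n i
      = ∑ n : Fin NT, (M n.succ i * (U n i / dt - ν * lapl Nh h (U n) i)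
          - M n.castSucc i * (U n i / dt)) := by
    intro i
    simp only [opAstar_eq NT Nh hNT, mul_sub (M _ i) (Fin.cases _ _ _), Finset.sum_sub_distrib]
    congr 1
    · rw [Fin.sum_univ_succ]; simp
    · rw [Fin.sum_univ_castSucc]; simp
  rw [Finset.sum_comm (s := (Finset.univ : Finset (Fin (NT + 1)))),
    Finset.sum_congr rfl fun i _ => hR i, Finset.sum_comm (s := (Finset.univ : Finset (ZMod Nh)))]
  refine Finset.sum_congr rfl fun n _ => ?_
  rw [← sub_eq_zero, ← Finset.sum_sub_distrib]
  have e : ∀ i, opA NT Nh dt ν h M n i * U n i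
      - (M n.succ i * (U n i / dt - ν * lapl Nh h (U n) i) - M n.castSucc i * (U n i / dt))
      = -ν * (lapl Nh h (M n.succ) i * U n i - M n.succ i * lapl Nh h (U n) i) := by
    intro i; unfold opA; ring
  rw [Finset.sum_congr rfl fun i _ => e i, ← Finset.mul_sum, Finset.sum_sub_distrib,
    sum_lapl_mul, sub_self, mul_zero]
end
end

section
/- (Constraint qualification.) In the discrete variational mean field game setting, assume M̄⁰ ∈ (ZMod N_h → ℝ) satisfies M̄⁰_i ≥ 0 for all i. Then there exists a pair (M̃, W̃) ∈ ℳ × 𝒲 such that Θ(M̃, W̃) < +∞ and Σ(M̃, W̃) = (0, M̄⁰), i.e. A M̃ + B W̃ = 0 in 𝒰 and M̃⁰ = M̄⁰. -/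
/-!
Replace the initial density by its spatial mean `c` after a single time step and keep it constant
from then on. A constant density has zero discrete Laplacian, so the constraint is satisfied with
zero flux at all later steps. At the first step it reads `u (i + 1) - u i = h * (M0bar i - c) / Δt`
for the second flux component `u` (the first one being zero); the right-hand side has zero sum over
the cycle, so a solution exists (`exists_cyclic_primitive`), and adding a constant makes it
nonnegative, i.e. the flux lies in the cone `K`. If `c > 0` every kinetic term is thus finite; if
`c = 0` then `M0bar = 0` and the flux can be taken to vanish, so that only `L̃(0,0)` occurs.
-/


noncomputable section
open Classical

/-- `(B W)^n_i = (W^n_{i+1,2} - W^n_{i,2})/h + (W^n_{i,1} - W^n_{i-1,1})/h`. -/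
def opB (NT Nh : ℕ) (h : ℝ) (W : Fin NT → ZMod Nh → ℝ × ℝ)
    (n : Fin NT) (i : ZMod Nh) : ℝ :=
  ((W n (i + 1)).2 - (W n i).2) / h + ((W n i).1 - (W n (i - 1)).1) / h

/-- `L̃(m,w) = |w|²/(2m)` if `m > 0` and `w ∈ K = (-∞,0] × [0,∞)`, `L̃(0,0) = 0`,
and `+∞` otherwise. -/
def Ltil (m : ℝ) (w : ℝ × ℝ) : EReal :=
  if 0 < m then
    (if w.1 ≤ 0 ∧ 0 ≤ w.2 then (((w.1 ^ 2 + w.2 ^ 2) / (2 * m) : ℝ) : EReal) else ⊤)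
  else if m = 0 ∧ w = 0 then (0 : EReal) else ⊤

/-- `F(m) = ∫₀^m f₀(s) ds` for `m ≥ 0`, `+∞` for `m < 0`. -/
def Fcost (f0 : ℝ → ℝ) (m : ℝ) : EReal :=
  if 0 ≤ m then ((∫ s in (0:ℝ)..m, f0 s : ℝ) : EReal) else ⊤

/-- The cost functional
`Θ(M,W) = ∑_{n=1}^{N_T} ∑_i [ L̃(M^n_i, W^{n-1}_i) + F(x_i, M^n_i) ]
          + (1/Δt) ∑_i Φ(x_i, M^{N_T}_i)`. -/
def Theta (NT Nh : ℕ) [NeZero Nh] (dt : ℝ) (f0 phi : ZMod Nh → ℝ → ℝ)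
    (M : Fin (NT + 1) → ZMod Nh → ℝ) (W : Fin NT → ZMod Nh → ℝ × ℝ) : EReal :=
  (∑ n : Fin NT, ∑ i : ZMod Nh,
      (Ltil (M n.succ i) (W n i) + Fcost (f0 i) (M n.succ i)))
    + ((1 / dt : ℝ) : EReal) * ∑ i : ZMod Nh, Fcost (phi i) (M (Fin.last NT) i)

/-- A function with zero sum on a cycle is the forward difference of some nonnegative function. -/
theorem exists_cyclic_primitive (N : ℕ) [NeZero N] (g : ZMod N → ℝ) (hg : ∑ i, g i = 0) :
    ∃ u : ZMod N → ℝ, (∀ i, 0 ≤ u i) ∧ ∀ i, u (i + 1) - u i = g i := by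
  have hN : 0 < N := Nat.pos_of_ne_zero (NeZero.ne N)
  have hsum : ∑ k ∈ Finset.range N, g (k : ZMod N) = 0 := by
    rw [← hg]
    refine Finset.sum_bij (fun k _ => (k : ZMod N)) (fun _ _ => Finset.mem_univ _) ?_ ?_ ?_
    · intro a ha b hb hab
      have := congrArg ZMod.val hab
      rwa [ZMod.val_cast_of_lt (Finset.mem_range.1 ha),
        ZMod.val_cast_of_lt (Finset.mem_range.1 hb)] at this
    · intro b _
      exact ⟨b.val, Finset.mem_range.2 (ZMod.val_lt b), ZMod.natCast_zmod_val b⟩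
    · intros
      rfl
  let v : ZMod N → ℝ := fun i => ∑ k ∈ Finset.range i.val, g (k : ZMod N)
  have hv : ∀ i, v (i + 1) - v i = g i := by
    intro i
    have hstep : ∑ k ∈ Finset.range (i.val + 1), g (k : ZMod N) = v i + g i := by
      rw [Finset.sum_range_succ, ZMod.natCast_zmod_val]
    have hcast : i + 1 = ((i.val + 1 : ℕ) : ZMod N) := by
      rw [Nat.cast_add, ZMod.natCast_zmod_val, Nat.cast_one]
    rcases Nat.lt_or_ge (i.val + 1) N with h | h
    · have hval : (i + 1).val = i.val + 1 := by rw [hcast, ZMod.val_cast_of_lt h]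
      have : v (i + 1) = v i + g i := by rw [← hstep, ← hval]
      linarith
    · -- wrapping around: `i + 1 = 0`, and the sum over the full period vanishes
      have hi : i.val + 1 = N := le_antisymm (ZMod.val_lt i) h
      have h0 : i + 1 = 0 := by rw [hcast, hi, ZMod.natCast_self]
      have : v (i + 1) = 0 := by simp [v, h0]
      rw [hi, hsum] at hstep
      linarith
  refine ⟨fun i => v i + ∑ j, |v j|, fun i => ?_, fun i => ?_⟩
  · have h1 := Finset.single_le_sum (f := fun j => |v j|) (fun j _ => abs_nonneg _)
      (Finset.mem_univ i)
    have h2 := neg_abs_le (v i)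
    simp only at h1 ⊢
    linarith
  · have := hv i
    simp only
    linarith

theorem Fcost_of_nonneg (f : ℝ → ℝ) {m : ℝ} (hm : 0 ≤ m) :
    Fcost f m = ((∫ s in (0:ℝ)..m, f s : ℝ) : EReal) := if_pos hm

/-- On its effective domain `L̃` is given by the quotient formula; at `(0, 0)` this relies on
`0 / 0 = 0`. -/
theorem Ltil_eq_coe {m : ℝ} {w : ℝ × ℝ} (hm : 0 ≤ m) (h1 : w.1 ≤ 0) (h2 : 0 ≤ w.2)
    (h0 : m = 0 → w = 0) : Ltil m w = (((w.1 ^ 2 + w.2 ^ 2) / (2 * m) : ℝ) : EReal) := by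
  rcases hm.lt_or_eq with h | h
  · simp [Ltil, h, h1, h2]
  · have hw := h0 h.symm
    subst h
    simp [Ltil, hw]

theorem coe_sum_EReal {ι : Type*} (s : Finset ι) (f : ι → ℝ) :
    ∑ i ∈ s, (f i : EReal) = ((∑ i ∈ s, f i : ℝ) : EReal) := by
  induction s using Finset.induction_on with
  | empty => simp
  | insert a s ha ih => rw [Finset.sum_insert ha, Finset.sum_insert ha, ih, EReal.coe_add]

theorem Theta_ne_top (NT Nh : ℕ) [NeZero Nh] (dt : ℝ) (f0 phi : ZMod Nh → ℝ → ℝ)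
    (M : Fin (NT + 1) → ZMod Nh → ℝ) (W : Fin NT → ZMod Nh → ℝ × ℝ)
    (hM : ∀ n i, 0 ≤ M n i) (h1 : ∀ n i, (W n i).1 ≤ 0) (h2 : ∀ n i, 0 ≤ (W n i).2)
    (h0 : ∀ n i, M n.succ i = 0 → W n i = 0) :
    Theta NT Nh dt f0 phi M W ≠ ⊤ := by
  simp only [Theta, Fcost_of_nonneg _ (hM _ _), Ltil_eq_coe (hM _ _) (h1 _ _) (h2 _ _) (h0 _ _),
    ← EReal.coe_add, coe_sum_EReal, ← EReal.coe_mul]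
  exact EReal.coe_ne_top _

/-- Constraint qualification: there exists `(M̃, W̃)` with finite cost satisfying the
discrete constraint `A M̃ + B W̃ = 0`, `M̃⁰ = M̄⁰`. -/
theorem constraint_qualification (NT Nh : ℕ) (hNT : 0 < NT) [NeZero Nh]
    (T ν : ℝ) (hT : 0 < T) (hν : 0 ≤ ν)
    (f0 phi : ZMod Nh → ℝ → ℝ)
    (hf0c : ∀ i, Continuous (f0 i)) (hf0m : ∀ i, Monotone (f0 i))
    (hphic : ∀ i, Continuous (phi i)) (hphim : ∀ i, Monotone (phi i))
    (M0bar : ZMod Nh → ℝ) (hM0 : ∀ i, 0 ≤ M0bar i) :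
    ∃ (M : Fin (NT + 1) → ZMod Nh → ℝ) (W : Fin NT → ZMod Nh → ℝ × ℝ),
      Theta NT Nh (T / NT) f0 phi M W ≠ ⊤ ∧
      (∀ (n : Fin NT) (i : ZMod Nh),
        opA NT Nh (T / NT) ν (1 / (Nh : ℝ)) M n i
          + opB NT Nh (1 / (Nh : ℝ)) W n i = 0) ∧
      (∀ i : ZMod Nh, M 0 i = M0bar i) := by
  have hNh : (0 : ℝ) < Nh := Nat.cast_pos.2 (Nat.pos_of_ne_zero (NeZero.ne Nh))
  have hdt : 0 < T / NT := div_pos hT (Nat.cast_pos.2 hNT)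
  obtain ⟨c, hc⟩ : ∃ c : ℝ, c = (∑ i, M0bar i) / Nh := ⟨_, rfl⟩
  have hcs : ∑ i, M0bar i = Nh * c := by rw [hc]; field_simp
  have hc0 : 0 ≤ c := by rw [hc]; exact div_nonneg (Finset.sum_nonneg fun i _ => hM0 i) hNh.le
  generalize T / NT = dt at hdt ⊢
  obtain ⟨u, hu0, hu, huc⟩ : ∃ u : ZMod Nh → ℝ, (∀ i, 0 ≤ u i) ∧
      (∀ i, u (i + 1) - u i = (1 / (Nh : ℝ)) * ((M0bar i - c) / dt)) ∧ (c = 0 → u = 0) := by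
    rcases eq_or_ne c 0 with h | h
    · rw [h, mul_zero, Finset.sum_eq_zero_iff_of_nonneg (fun i _ => hM0 i)] at hcs
      exact ⟨0, fun i => le_rfl, fun i => by simp [h, hcs i (Finset.mem_univ i)], fun _ => rfl⟩
    · obtain ⟨u, hu0, hu⟩ := exists_cyclic_primitive Nh
        (fun i => (1 / (Nh : ℝ)) * ((M0bar i - c) / dt)) (by
          rw [← Finset.mul_sum, ← Finset.sum_div, Finset.sum_sub_distrib, hcs]
          simp [ZMod.card])
      exact ⟨u, hu0, hu, fun h' => absurd h' h⟩
  refine ⟨fun n i => if n = 0 then M0bar i else c,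
    fun n i => if n.castSucc = 0 then (0, u i) else 0, ?_, ?_, fun i => if_pos rfl⟩
  · refine Theta_ne_top _ _ _ _ _ _ _ (fun n i => ?_) (fun n i => ?_) (fun n i => ?_)
      (fun n i h => ?_)
    · split_ifs
      exacts [hM0 i, hc0]
    · split_ifs <;> simp
    · split_ifs
      exacts [hu0 i, le_rfl]
    · rw [if_neg (Fin.succ_ne_zero n)] at h
      simp [huc h]
  · intro n i
    have hlap : lapl Nh (1 / (Nh : ℝ)) (fun _ => c) i = 0 := by
      simp only [lapl]
      ring
    simp only [opA, opB, Fin.succ_ne_zero, if_false, hlap]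
    split_ifs with h
    · simp only [hu i]
      field_simp
      ring
    · simp
end
end

section
/- In the discrete variational mean field game setting, the cost functional Θ : ℳ × 𝒲 → ℝ ∪ {+∞} is proper, convex, and lower semicontinuous. -/
/-!
Functions into the extended reals that avoid `-∞`, are convex and are lower semicontinuous form a
class (`Good`) stable under finite sums, multiplication by nonnegative reals and precomposition
with continuous linear maps. Since `Θ` is such a combination of the terms `L̃`, `F` and `Φ`
evaluated at coordinates of `(M, W)`, it suffices to treat these terms.

For each of them the set `{(p, t) : g p ≤ t}`, `t` real, is described explicitly. For `L̃`
it is `m ≥ 0`, `t ≥ 0`, `w ∈ K`, `|w|² ≤ 2 m t`: a rotated second-order cone cut by half-spaces,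
hence closed and convex. This also covers the degenerate point `m = 0`, where the last inequality
forces `w = 0`. For `F` and `Φ`, the primitive of a continuous nondecreasing function is
differentiable with monotone derivative, hence convex and continuous, and it is restricted to the
closed half-line `m ≥ 0`. Finally `Θ(0, 0) = 0`, so `Θ` is not identically `+∞`.
-/

noncomputable section
open Classical

/-- A function into the extended reals is a *good* summand if it never takes the value `-∞`, is
convex and is lower semicontinuous. This class is closed under sums, nonnegative scaling and
precomposition with continuous linear maps. -/
structure Good {E : Type*} [AddCommGroup E] [Module ℝ E] [TopologicalSpace E]
    (g : E → EReal) : Prop where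
  ne_bot : ∀ p, g p ≠ ⊥
  conv : ∀ (p q : E) (a b : ℝ), 0 ≤ a → 0 ≤ b → a + b = 1 →
    g (a • p + b • q) ≤ (a : EReal) * g p + (b : EReal) * g q
  lsc : LowerSemicontinuous g

section
variable {E : Type*} [AddCommGroup E] [Module ℝ E] [TopologicalSpace E]

/-- Convexity and closedness need only be checked on the real part of the epigraph and on real
sublevel sets, provided `-∞` is never attained. -/
theorem Good.of_real {g : E → EReal} (h0 : ∀ p, g p ≠ ⊥)
    (hc : ∀ (p q : E) (s t a b : ℝ), 0 ≤ a → 0 ≤ b → a + b = 1 → g p ≤ (s : EReal) →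
      g q ≤ (t : EReal) → g (a • p + b • q) ≤ ((a * s + b * t : ℝ) : EReal))
    (hl : ∀ t : ℝ, IsClosed {p | g p ≤ (t : EReal)}) : Good g := by
  refine ⟨h0, ?_, ?_⟩
  · intro p q a b ha hb hab
    -- For a vanishing weight the convention `0 * ⊤ = 0` makes the inequality an equality.
    rcases ha.eq_or_lt with rfl | ha'
    · obtain rfl : b = 1 := by linarith
      simp
    rcases hb.eq_or_lt with rfl | hb'
    · obtain rfl : a = 1 := by linarith
      simp
    have hmul : ∀ (c : ℝ) (x : E), 0 < c → (c : EReal) * g x ≠ ⊥ := by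
      intro c x hcpos
      have hx := h0 x
      induction hgx : g x with
      | bot => exact absurd hgx hx
      | top => simp [EReal.coe_mul_top_of_pos hcpos]
      | coe r => rw [← EReal.coe_mul]; exact EReal.coe_ne_bot _
    by_cases hp : g p = ⊤
    · rw [hp, EReal.coe_mul_top_of_pos ha', EReal.top_add_of_ne_bot (hmul b q hb')]
      exact le_top
    by_cases hq : g q = ⊤
    · rw [hq, EReal.coe_mul_top_of_pos hb', EReal.add_top_of_ne_bot (hmul a p ha')]
      exact le_top
    have ep := EReal.coe_toReal hp (h0 p)
    have eq' := EReal.coe_toReal hq (h0 q)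
    have := hc p q _ _ a b ha hb hab ep.ge eq'.ge
    rwa [EReal.coe_add, EReal.coe_mul, EReal.coe_mul, ep, eq'] at this
  · rw [lowerSemicontinuous_iff_isClosed_preimage]
    intro y
    induction y with
    | bot =>
      convert isClosed_empty (X := E)
      ext p
      simpa using h0 p
    | top => simp
    | coe t => exact hl t

theorem Good.zero : Good (fun _ : E => (0 : EReal)) :=
  ⟨by simp, by simp, lowerSemicontinuous_const⟩

theorem Good.add {f g : E → EReal} (hf : Good f) (hg : Good g) :
    Good (fun p => f p + g p) := by
  refine ⟨fun p => ?_, ?_, ?_⟩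
  · simp [EReal.add_eq_bot_iff, hf.ne_bot p, hg.ne_bot p]
  · intro p q a b ha hb hab
    have h := add_le_add (hf.conv p q a b ha hb hab) (hg.conv p q a b ha hb hab)
    have ha' : (0 : EReal) ≤ a := by exact_mod_cast ha
    have hb' : (0 : EReal) ≤ b := by exact_mod_cast hb
    rw [EReal.left_distrib_of_nonneg_of_ne_top ha' (EReal.coe_ne_top a),
      EReal.left_distrib_of_nonneg_of_ne_top hb' (EReal.coe_ne_top b)]
    rwa [add_add_add_comm] at h
  · exact hf.lsc.add' hg.lsc fun p =>
      EReal.continuousAt_add (Or.inr (hg.ne_bot p)) (Or.inl (hf.ne_bot p))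

theorem Good.sum {ι : Type*} (s : Finset ι) {f : ι → E → EReal} (hf : ∀ i, Good (f i)) :
    Good (fun p => ∑ i ∈ s, f i p) := by
  classical
  induction s using Finset.induction_on with
  | empty => simpa using Good.zero
  | insert i s hi ih =>
    simp only [Finset.sum_insert hi]
    exact (hf i).add ih

theorem Good.const_mul {f : E → EReal} (hf : Good f) {c : ℝ} (hc : 0 ≤ c) :
    Good (fun p => (c : EReal) * f p) := by
  have hc' : (0 : EReal) ≤ c := by exact_mod_cast hc
  refine ⟨fun p => ?_, ?_, ?_⟩
  · have hx := hf.ne_bot p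
    rcases hc.eq_or_lt with rfl | hpos
    · simp
    induction hgx : f p with
    | bot => exact absurd hgx hx
    | top => simp [EReal.coe_mul_top_of_pos hpos]
    | coe r => rw [← EReal.coe_mul]; exact EReal.coe_ne_bot _
  · intro p q a b ha hb hab
    have h := mul_le_mul_of_nonneg_left (hf.conv p q a b ha hb hab) hc'
    rwa [EReal.left_distrib_of_nonneg_of_ne_top hc' (EReal.coe_ne_top c),
      mul_left_comm, mul_left_comm (c : EReal)] at h
  · rcases hc.eq_or_lt with rfl | hpos
    · simpa using lowerSemicontinuous_const
    have hc0 : (c : EReal) ≠ 0 := by exact_mod_cast hpos.ne'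
    have hcont : Continuous (fun x : EReal => (c : EReal) * x) :=
      continuous_iff_continuousAt.2 fun x => by
        have h := EReal.continuousAt_mul (p := ((c : EReal), x))
          (Or.inl hc0) (Or.inl hc0) (Or.inl (EReal.coe_ne_bot c)) (Or.inl (EReal.coe_ne_top c))
        exact h.comp (f := fun x : EReal => ((c : EReal), x)) (by fun_prop)
    exact hcont.comp_lowerSemicontinuous hf.lsc
      fun x y hxy => mul_le_mul_of_nonneg_left hxy hc'

theorem Good.comp {G : Type*} [AddCommGroup G] [Module ℝ G] [TopologicalSpace G]
    {f : G → EReal} (hf : Good f) (L : E →L[ℝ] G) : Good (fun p => f (L p)) :=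
  ⟨fun p => hf.ne_bot _, fun p q a b ha hb hab => by
    simpa using hf.conv (L p) (L q) a b ha hb hab, hf.lsc.comp L.continuous⟩

end

/-- The real epigraph of `L̃` is a rotated second-order cone intersected with `w ∈ K`. -/
theorem Ltil_le_coe_iff (m : ℝ) (w : ℝ × ℝ) (t : ℝ) :
    Ltil m w ≤ (t : EReal) ↔
      0 ≤ m ∧ 0 ≤ t ∧ w.1 ≤ 0 ∧ 0 ≤ w.2 ∧ w.1 ^ 2 + w.2 ^ 2 ≤ 2 * m * t := by
  unfold Ltil
  split_ifs with hm hK h0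
  · rw [EReal.coe_le_coe_iff, div_le_iff₀ (by positivity)]
    constructor
    · intro h
      refine ⟨hm.le, ?_, hK.1, hK.2, by linarith⟩
      by_contra! ht
      nlinarith [sq_nonneg w.1, sq_nonneg w.2]
    · rintro ⟨-, -, -, -, h⟩
      linarith
  · simp only [top_le_iff, EReal.coe_ne_top, false_iff]
    tauto
  · obtain ⟨rfl, rfl⟩ := h0
    simp
  · simp only [top_le_iff, EReal.coe_ne_top, false_iff]
    rintro ⟨h1, -, -, -, h⟩
    have hm0 : m = 0 := le_antisymm (not_lt.1 hm) h1
    subst hm0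
    refine h0 ⟨rfl, Prod.ext ?_ ?_⟩ <;> simp only [Prod.fst_zero, Prod.snd_zero] <;>
      nlinarith [sq_nonneg w.1, sq_nonneg w.2]

theorem Ltil_good : Good (fun p : ℝ × (ℝ × ℝ) => Ltil p.1 p.2) := by
  refine Good.of_real ?_ ?_ ?_
  · intro p
    unfold Ltil
    split_ifs <;> first | exact EReal.coe_ne_bot _ | simp
  · rintro ⟨m, w, x⟩ ⟨n, v, y⟩ s t a b ha hb - hp hq
    rw [Ltil_le_coe_iff] at hp hq ⊢
    obtain ⟨hm, hs, hw, hx, h1⟩ := hp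
    obtain ⟨hn, ht, hv, hy, h2⟩ := hq
    simp only [Prod.smul_mk, Prod.mk_add_mk, smul_eq_mul] at *
    refine ⟨by positivity, by positivity, by nlinarith, by positivity, ?_⟩
    -- Cauchy-Schwarz followed by the inequality of means bounds the cross term.
    have hcross : w * v + x * y ≤ m * t + n * s := by
      refine abs_le_of_sq_le_sq' ?_ (by positivity) |>.2
      have hcs : (w * v + x * y) ^ 2 ≤ (w ^ 2 + x ^ 2) * (v ^ 2 + y ^ 2) := by
        nlinarith [sq_nonneg (w * y - x * v)]
      have hprod : (w ^ 2 + x ^ 2) * (v ^ 2 + y ^ 2) ≤ (2 * m * s) * (2 * n * t) :=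
        mul_le_mul h1 h2 (by positivity) (by positivity)
      nlinarith [sq_nonneg (m * t - n * s)]
    have e1 := mul_le_mul_of_nonneg_left h1 (sq_nonneg a)
    have e2 := mul_le_mul_of_nonneg_left h2 (sq_nonneg b)
    have e3 := mul_le_mul_of_nonneg_left hcross (mul_nonneg ha hb)
    linarith
  · intro t
    simp only [Ltil_le_coe_iff, Set.ofPred_and]
    refine .inter ?_ (.inter ?_ (.inter ?_ (.inter ?_ ?_))) <;>
      exact isClosed_le (by fun_prop) (by fun_prop)

theorem Fcost_le_coe_iff (f : ℝ → ℝ) (m t : ℝ) :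
    Fcost f m ≤ (t : EReal) ↔ 0 ≤ m ∧ ∫ s in (0:ℝ)..m, f s ≤ t := by
  unfold Fcost
  split_ifs with h <;> simp [h]

theorem Fcost_good {f : ℝ → ℝ} (hc : Continuous f) (hm : Monotone f) : Good (Fcost f) := by
  have hd : ∀ x, HasDerivAt (fun m => ∫ s in (0:ℝ)..m, f s) (f x) x := fun x =>
    intervalIntegral.integral_hasDerivAt_right (hc.intervalIntegrable _ _)
      (hc.stronglyMeasurableAtFilter _ _) hc.continuousAt
  have hdiff : Differentiable ℝ (fun m => ∫ s in (0:ℝ)..m, f s) :=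
    fun x => (hd x).differentiableAt
  have hconv : ConvexOn ℝ Set.univ (fun m => ∫ s in (0:ℝ)..m, f s) := by
    refine Monotone.convexOn_univ_of_deriv hdiff ?_
    rwa [show deriv (fun m => ∫ s in (0:ℝ)..m, f s) = f from funext fun x => (hd x).deriv]
  refine Good.of_real ?_ ?_ ?_
  · intro p
    unfold Fcost
    split_ifs <;> first | exact EReal.coe_ne_bot _ | simp
  · intro p q s t a b ha hb hab hp hq
    rw [Fcost_le_coe_iff] at *
    have h := hconv.2 (Set.mem_univ p) (Set.mem_univ q) ha hb hab
    have e1 := mul_le_mul_of_nonneg_left hp.2 ha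
    have e2 := mul_le_mul_of_nonneg_left hq.2 hb
    have hp1 := hp.1
    have hq1 := hq.1
    simp only [smul_eq_mul] at *
    exact ⟨by positivity, by linarith⟩
  · intro t
    simp only [Fcost_le_coe_iff, Set.ofPred_and]
    exact (isClosed_le (by fun_prop) (by fun_prop)).inter
      (isClosed_le hdiff.continuous (by fun_prop))

theorem Theta_good (NT Nh : ℕ) [NeZero Nh] {dt : ℝ} (hdt : 0 ≤ dt) (f0 phi : ZMod Nh → ℝ → ℝ)
    (hf0c : ∀ i, Continuous (f0 i)) (hf0m : ∀ i, Monotone (f0 i))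
    (hphic : ∀ i, Continuous (phi i)) (hphim : ∀ i, Monotone (phi i)) :
    Good (fun p : (Fin (NT + 1) → ZMod Nh → ℝ) × (Fin NT → ZMod Nh → ℝ × ℝ) =>
      Theta NT Nh dt f0 phi p.1 p.2) := by
  let evM (n : Fin (NT + 1)) (i : ZMod Nh) :
      ((Fin (NT + 1) → ZMod Nh → ℝ) × (Fin NT → ZMod Nh → ℝ × ℝ)) →L[ℝ] ℝ :=
    (ContinuousLinearMap.proj (R := ℝ) (φ := fun _ : ZMod Nh => ℝ) i).comp
      ((ContinuousLinearMap.proj (R := ℝ) (φ := fun _ : Fin (NT + 1) => ZMod Nh → ℝ) n).comp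
        (ContinuousLinearMap.fst ℝ _ _))
  let evW (n : Fin NT) (i : ZMod Nh) :
      ((Fin (NT + 1) → ZMod Nh → ℝ) × (Fin NT → ZMod Nh → ℝ × ℝ)) →L[ℝ] ℝ × ℝ :=
    (ContinuousLinearMap.proj (R := ℝ) (φ := fun _ : ZMod Nh => ℝ × ℝ) i).comp
      ((ContinuousLinearMap.proj (R := ℝ) (φ := fun _ : Fin (NT) => ZMod Nh → ℝ × ℝ) n).comp
        (ContinuousLinearMap.snd ℝ _ _))
  unfold Theta
  refine Good.add (Good.sum _ fun n => Good.sum _ fun i => Good.add ?_ ?_)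
    (Good.const_mul (Good.sum _ fun i => ?_) (by positivity))
  · exact Ltil_good.comp ((evM n.succ i).prod (evW n i))
  · exact (Fcost_good (hf0c i) (hf0m i)).comp (evM n.succ i)
  · exact (Fcost_good (hphic i) (hphim i)).comp (evM (Fin.last NT) i)

/-- The cost functional `Θ` is proper (never `-∞` and not identically `+∞`),
jointly convex, and lower semicontinuous on `ℳ × 𝒲`. -/
theorem Theta_proper_convex_lsc (NT Nh : ℕ) (hNT : 0 < NT) [NeZero Nh]
    (T : ℝ) (hT : 0 < T)
    (f0 phi : ZMod Nh → ℝ → ℝ)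
    (hf0c : ∀ i, Continuous (f0 i)) (hf0m : ∀ i, Monotone (f0 i))
    (hphic : ∀ i, Continuous (phi i)) (hphim : ∀ i, Monotone (phi i)) :
    (∀ p : (Fin (NT + 1) → ZMod Nh → ℝ) × (Fin NT → ZMod Nh → ℝ × ℝ),
      Theta NT Nh (T / NT) f0 phi p.1 p.2 ≠ ⊥) ∧
    (∃ p : (Fin (NT + 1) → ZMod Nh → ℝ) × (Fin NT → ZMod Nh → ℝ × ℝ),
      Theta NT Nh (T / NT) f0 phi p.1 p.2 ≠ ⊤) ∧
    (∀ (p q : (Fin (NT + 1) → ZMod Nh → ℝ) × (Fin NT → ZMod Nh → ℝ × ℝ))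
        (a b : ℝ), 0 ≤ a → 0 ≤ b → a + b = 1 →
      Theta NT Nh (T / NT) f0 phi (a • p + b • q).1 (a • p + b • q).2
        ≤ (a : EReal) * Theta NT Nh (T / NT) f0 phi p.1 p.2
          + (b : EReal) * Theta NT Nh (T / NT) f0 phi q.1 q.2) ∧
    LowerSemicontinuous
      (fun p : (Fin (NT + 1) → ZMod Nh → ℝ) × (Fin NT → ZMod Nh → ℝ × ℝ) =>
        Theta NT Nh (T / NT) f0 phi p.1 p.2) := by
  have h := Theta_good NT Nh (dt := T / NT) (by positivity) f0 phi hf0c hf0m hphic hphim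
  refine ⟨h.ne_bot, ⟨0, ?_⟩, h.conv, h.lsc⟩
  simp [Theta, Ltil, Fcost]
end
end

section
/- Let γ > 0 with γ ≠ 1 and z > 0. Define u(c) = c^{1−γ}/(1−γ) for c > 0, and for p > 0 set H(p) = sup_{c > 0} ((z − c)p + u(c)), H^↑(p) = sup_{0 < c ≤ z} ((z − c)p + u(c)), and H^↓(p) = sup_{c ≥ z} ((z − c)p + u(c)). Then: (i) H^↑ is nondecreasing on (0, ∞) and H^↓ is nonincreasing on (0, ∞); (ii) inf_{p > 0} H(p) = u(z), and the infimum is attained at p_min = z^{−γ}; (iii) for every p > 0, H(p) = H^↑(p) + H^↓(p) − inf_{q > 0} H(q), i.e. H(p) = H^↑(p) + H^↓(p) − u(z). -/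
/-!
CRRA utility is concave, so it lies below its tangents: `u(c) ≤ u(a) + a^{-γ} (c - a)`
(`crra_le_tangent`, which is Bernoulli's inequality in scaled form).

The tangent at `a = p^{-1/γ}`, whose slope is `p`, bounds `(z - c) p + u(c)` from above over `c > 0`;
hence all three suprema are genuine, and monotonicity of the envelopes follows from the sign of
`z - c`.

The tangent at `z` compares `p` with `z^{-γ}`: if `z^{-γ} ≤ p`, then consuming `c ≥ z` yields at most
`u(z)`, so `H^↓(p) = u(z)`; if `p ≤ z^{-γ}`, then consuming `c ≤ z` yields at most `u(z)`, so
`H^↑(p) = u(z)`. Both envelopes are at least `u(z)` (take `c = z`), so the smaller of the two is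
always `u(z)`. Since `H = max (H^↑, H^↓)`, this gives `H = H^↑ + H^↓ - u(z)`, and at `p = z^{-γ}` both
envelopes equal `u(z)`.
-/

noncomputable section

/-- CRRA utility `u(c) = c^{1-γ}/(1-γ)`. -/
def crra (γ c : ℝ) : ℝ := c ^ (1 - γ) / (1 - γ)

/-- Huggett Hamiltonian `H(p) = sup_{c > 0} ((z - c) p + u(c))`. -/
def Ham (γ z p : ℝ) : ℝ :=
  sSup ((fun c : ℝ => (z - c) * p + crra γ c) '' {c : ℝ | 0 < c})

/-- Nondecreasing envelope `H^↑(p) = sup_{0 < c ≤ z} ((z - c) p + u(c))`. -/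
def HamUp (γ z p : ℝ) : ℝ :=
  sSup ((fun c : ℝ => (z - c) * p + crra γ c) '' {c : ℝ | 0 < c ∧ c ≤ z})

/-- Nonincreasing envelope `H^↓(p) = sup_{c ≥ z} ((z - c) p + u(c))`. -/
def HamDown (γ z p : ℝ) : ℝ :=
  sSup ((fun c : ℝ => (z - c) * p + crra γ c) '' {c : ℝ | z ≤ c})

/-- The tangent inequality at `1`. For `γ < 1` it is Bernoulli's inequality; for `γ > 1` it is the
weighted AM-GM inequality for `t ^ (1 - γ)` and `t` with weights `1 / γ` and `(γ - 1) / γ`, whose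
geometric mean is `1`. -/
lemma rpow_sub_one_div_le {γ t : ℝ} (hγ : 0 < γ) (hγ1 : γ ≠ 1) (ht : 0 < t) :
    (t ^ (1 - γ) - 1) / (1 - γ) ≤ t - 1 := by
  rcases lt_or_gt_of_ne hγ1 with h | h
  · rw [div_le_iff₀ (by linarith)]
    have := rpow_one_add_le_one_add_mul_self (s := t - 1) (by linarith) (p := 1 - γ)
      (by linarith) (by linarith)
    rw [add_sub_cancel] at this
    linarith
  · rw [div_le_iff_of_neg (by linarith)]
    have key := Real.geom_mean_le_arith_mean2_weighted (w₁ := 1 / γ) (w₂ := (γ - 1) / γ)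
      (p₁ := t ^ (1 - γ)) (p₂ := t) (by positivity) (div_nonneg (by linarith) hγ.le)
      (by positivity) ht.le (by field_simp; ring)
    have h1 : (t ^ (1 - γ)) ^ (1 / γ) * t ^ ((γ - 1) / γ) = 1 := by
      rw [← Real.rpow_mul ht.le, ← Real.rpow_add ht]
      have : (1 - γ) * (1 / γ) + (γ - 1) / γ = 0 := by ring
      rw [this, Real.rpow_zero]
    have h2 : 1 / γ * t ^ (1 - γ) + (γ - 1) / γ * t = (t ^ (1 - γ) + (γ - 1) * t) / γ := by ring
    rw [h1, h2, le_div_iff₀ hγ] at key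
    linarith

/-- Concavity of CRRA utility: it lies below its tangent at any `a > 0`, where `u'(a) = a^{-γ}`. -/
lemma crra_le_tangent {γ a c : ℝ} (hγ : 0 < γ) (hγ1 : γ ≠ 1) (ha : 0 < a) (hc : 0 < c) :
    crra γ c ≤ crra γ a + a ^ (-γ) * (c - a) := by
  have ht := rpow_sub_one_div_le hγ hγ1 (div_pos hc ha)
  have ha' : a ^ (1 - γ) = a * a ^ (-γ) := by
    rw [sub_eq_add_neg, Real.rpow_add ha, Real.rpow_one]
  have hct : c ^ (1 - γ) = a ^ (1 - γ) * (c / a) ^ (1 - γ) := by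
    rw [← Real.mul_rpow ha.le (by positivity), mul_div_cancel₀ _ ha.ne']
  have hpos : 0 < a ^ (1 - γ) := Real.rpow_pos_of_pos ha _
  have h := mul_le_mul_of_nonneg_left ht hpos.le
  have hl : a ^ (1 - γ) * (((c / a) ^ (1 - γ) - 1) / (1 - γ)) = crra γ c - crra γ a := by
    unfold crra
    rw [hct]
    ring
  have hr : a ^ (1 - γ) * (c / a - 1) = a ^ (-γ) * (c - a) := by
    rw [ha']
    field_simp
  linarith

lemma bddAbove_objective {γ p : ℝ} (z : ℝ) (hγ : 0 < γ) (hγ1 : γ ≠ 1) (hp : 0 < p) :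
    BddAbove ((fun c : ℝ => (z - c) * p + crra γ c) '' {c : ℝ | 0 < c}) := by
  -- The optimal consumption: its marginal utility `a ^ (-γ)` equals `p`.
  set a := p ^ (-1 / γ) with ha
  have hapos : 0 < a := Real.rpow_pos_of_pos hp _
  have hslope : a ^ (-γ) = p := by
    rw [ha, ← Real.rpow_mul hp.le]
    have : -1 / γ * -γ = 1 := by field_simp
    rw [this, Real.rpow_one]
  refine ⟨(z - a) * p + crra γ a, ?_⟩
  rintro _ ⟨c, hc, rfl⟩
  have := crra_le_tangent hγ hγ1 hapos hc
  rw [hslope] at this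
  dsimp only
  linarith

lemma bddAbove_objective_up {γ p : ℝ} (z : ℝ) (hγ : 0 < γ) (hγ1 : γ ≠ 1) (hp : 0 < p) :
    BddAbove ((fun c : ℝ => (z - c) * p + crra γ c) '' {c : ℝ | 0 < c ∧ c ≤ z}) :=
  (bddAbove_objective z hγ hγ1 hp).mono (Set.image_mono fun _ hc => hc.1)

lemma bddAbove_objective_down {γ z p : ℝ} (hγ : 0 < γ) (hγ1 : γ ≠ 1) (hz : 0 < z) (hp : 0 < p) :
    BddAbove ((fun c : ℝ => (z - c) * p + crra γ c) '' {c : ℝ | z ≤ c}) :=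
  (bddAbove_objective z hγ hγ1 hp).mono (Set.image_mono fun _ hc => hz.trans_le hc)

lemma monotoneOn_hamUp {γ z : ℝ} (hγ : 0 < γ) (hγ1 : γ ≠ 1) (hz : 0 < z) :
    MonotoneOn (HamUp γ z) (Set.Ioi 0) := by
  intro p _ q hq hpq
  refine csSup_le (Set.Nonempty.image _ ⟨z, hz, le_rfl⟩) ?_
  rintro _ ⟨c, hc, rfl⟩
  refine le_csSup_of_le (bddAbove_objective_up z hγ hγ1 hq) ⟨c, hc, rfl⟩ ?_
  have := mul_le_mul_of_nonneg_left hpq (sub_nonneg.2 hc.2)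
  dsimp only
  linarith

lemma antitoneOn_hamDown {γ z : ℝ} (hγ : 0 < γ) (hγ1 : γ ≠ 1) (hz : 0 < z) :
    AntitoneOn (HamDown γ z) (Set.Ioi 0) := by
  intro p hp q _ hpq
  refine csSup_le (Set.Nonempty.image _ ⟨z, le_refl z⟩) ?_
  rintro _ ⟨c, hc, rfl⟩
  refine le_csSup_of_le (bddAbove_objective_down hγ hγ1 hz hp) ⟨c, hc, rfl⟩ ?_
  have := mul_le_mul_of_nonpos_left hpq (sub_nonpos.2 (show z ≤ c from hc))
  dsimp only
  linarith

lemma crra_le_hamUp {γ z p : ℝ} (hγ : 0 < γ) (hγ1 : γ ≠ 1) (hz : 0 < z) (hp : 0 < p) :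
    crra γ z ≤ HamUp γ z p :=
  le_csSup (bddAbove_objective_up z hγ hγ1 hp) ⟨z, ⟨hz, le_rfl⟩, by simp⟩

lemma crra_le_hamDown {γ z p : ℝ} (hγ : 0 < γ) (hγ1 : γ ≠ 1) (hz : 0 < z) (hp : 0 < p) :
    crra γ z ≤ HamDown γ z p :=
  le_csSup (bddAbove_objective_down hγ hγ1 hz hp) ⟨z, le_refl z, by simp⟩

lemma ham_eq_max {γ z p : ℝ} (hγ : 0 < γ) (hγ1 : γ ≠ 1) (hz : 0 < z) (hp : 0 < p) :
    Ham γ z p = max (HamUp γ z p) (HamDown γ z p) := by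
  have hset : {c : ℝ | 0 < c} = {c : ℝ | 0 < c ∧ c ≤ z} ∪ {c : ℝ | z ≤ c} := by
    ext c
    simp only [Set.mem_ofPred_eq, Set.mem_union]
    constructor
    · intro h
      exact (le_total c z).imp (fun hcz => ⟨h, hcz⟩) id
    · rintro (h | h)
      · exact h.1
      · exact hz.trans_le h
  unfold Ham HamUp HamDown
  rw [hset, Set.image_union]
  exact csSup_union (bddAbove_objective_up z hγ hγ1 hp) (Set.Nonempty.image _ ⟨z, hz, le_rfl⟩)
    (bddAbove_objective_down hγ hγ1 hz hp) (Set.Nonempty.image _ ⟨z, le_refl z⟩)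

/-- To the left of `p_min`, the nondecreasing envelope is flat. -/
lemma hamUp_eq_crra {γ z p : ℝ} (hγ : 0 < γ) (hγ1 : γ ≠ 1) (hz : 0 < z) (hp : 0 < p)
    (hpz : p ≤ z ^ (-γ)) : HamUp γ z p = crra γ z := by
  refine le_antisymm (csSup_le (Set.Nonempty.image _ ⟨z, hz, le_rfl⟩) ?_)
    (crra_le_hamUp hγ hγ1 hz hp)
  rintro _ ⟨c, hc, rfl⟩
  have h1 := crra_le_tangent hγ hγ1 hz hc.1
  have h2 := mul_le_mul_of_nonneg_left hpz (sub_nonneg.2 hc.2)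
  dsimp only
  linarith

/-- To the right of `p_min`, the nonincreasing envelope is flat. -/
lemma hamDown_eq_crra {γ z p : ℝ} (hγ : 0 < γ) (hγ1 : γ ≠ 1) (hz : 0 < z) (hp : 0 < p)
    (hpz : z ^ (-γ) ≤ p) : HamDown γ z p = crra γ z := by
  refine le_antisymm (csSup_le (Set.Nonempty.image _ ⟨z, le_refl z⟩) ?_)
    (crra_le_hamDown hγ hγ1 hz hp)
  rintro _ ⟨c, hc, rfl⟩
  have hzc : z ≤ c := hc
  have h1 := crra_le_tangent hγ hγ1 hz (hz.trans_le hzc)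
  have h2 := mul_le_mul_of_nonpos_left hpz (sub_nonpos.2 hzc)
  dsimp only
  linarith

/-- Envelopes of the Huggett Hamiltonian: `H^↑` is nondecreasing and `H^↓` is
nonincreasing on `(0,∞)`; `inf_{p>0} H(p) = u(z)` attained at `p_min = z^{-γ}`;
and `H = H^↑ + H^↓ - u(z)` on `(0,∞)`. -/
theorem huggett_envelopes (γ z : ℝ) (hγ : 0 < γ) (hγ1 : γ ≠ 1) (hz : 0 < z) :
    MonotoneOn (HamUp γ z) (Set.Ioi 0) ∧
    AntitoneOn (HamDown γ z) (Set.Ioi 0) ∧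
    (∀ p ∈ Set.Ioi (0 : ℝ), crra γ z ≤ Ham γ z p) ∧
    Ham γ z (z ^ (-γ)) = crra γ z ∧
    (∀ p ∈ Set.Ioi (0 : ℝ), Ham γ z p = HamUp γ z p + HamDown γ z p - crra γ z) := by
  have hpmin : 0 < z ^ (-γ) := Real.rpow_pos_of_pos hz _
  refine ⟨monotoneOn_hamUp hγ hγ1 hz, antitoneOn_hamDown hγ hγ1 hz, ?_, ?_, ?_⟩
  · intro p hp
    rw [ham_eq_max hγ hγ1 hz hp]
    exact le_max_of_le_left (crra_le_hamUp hγ hγ1 hz hp)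
  · rw [ham_eq_max hγ hγ1 hz hpmin, hamUp_eq_crra hγ hγ1 hz hpmin le_rfl,
      hamDown_eq_crra hγ hγ1 hz hpmin le_rfl, max_self]
  · intro p hp
    rw [ham_eq_max hγ hγ1 hz hp]
    rcases le_total p (z ^ (-γ)) with h | h
    · rw [hamUp_eq_crra hγ hγ1 hz hp h, max_eq_right (crra_le_hamDown hγ hγ1 hz hp)]
      ring
    · rw [hamDown_eq_crra hγ hγ1 hz hp h, max_eq_left (crra_le_hamUp hγ hγ1 hz hp)]
      ring
end
end

section
/- Let (Ω, μ) be a σ-finite measure space, d ≥ 1, and let L₀ : ℝ^d → ℝ be convex with −c + (1/C)|γ|^r ≤ L₀(γ) ≤ c + C|γ|^r for all γ, where c ≥ 0, C > 0, r > 1. Define L(m, w) = m·L₀(w/m) if m > 0, L(0,0) = 0, and L(m, w) = +∞ otherwise. Let m : Ω → ℝ and w : Ω → ℝ^d be measurable and μ-integrable, and assume ∫_Ω L(m(ω), w(ω)) dμ(ω) < +∞. Then m ≥ 0 μ-a.e., w = 0 μ-a.e. on the set {m = 0}, and there exists a measurable function γ : Ω → ℝ^d such that w = m·γ μ-a.e.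 and ∫_Ω m(ω) |γ(ω)|^r dμ(ω) < +∞. -/
/-!
Finiteness of the Lagrangian forces, almost everywhere, either `m > 0` or `m = 0` and `w = 0`.
Hence `γ = m⁻¹ • w` satisfies `w = m • γ` almost everywhere: on `{m = 0}` both sides vanish, since
`0⁻¹ = 0`. Multiplying the lower growth bound on `L₀` at `γ` by `C m` gives
`m |γ|^r ≤ C (L(m, w) + c m)`, whose right-hand side is integrable.
-/

noncomputable section
open Classical MeasureTheory

/-- The perspective-type Lagrangian `L(m,w) = m L₀(w/m)` for `m > 0`,
`L(0,0) = 0`, and `+∞` otherwise. -/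
def Lpersp (d : ℕ) (L0 : EuclideanSpace ℝ (Fin d) → ℝ) (m : ℝ)
    (w : EuclideanSpace ℝ (Fin d)) : EReal :=
  if 0 < m then ((m * L0 (m⁻¹ • w) : ℝ) : EReal)
  else if m = 0 ∧ w = 0 then (0 : EReal) else ⊤

/-- If `∫ L(m(ω), w(ω)) dμ < +∞` (encoded as: the integrand is a.e. finite and its
real part is integrable), then `m ≥ 0` a.e., `w = 0` a.e. on `{m = 0}`, and
`w = m γ` for a measurable `γ` with `∫ m |γ|^r dμ < +∞`. -/
theorem perspective_integral_finite (d : ℕ) (hd : 1 ≤ d)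
    {Ω : Type*} [MeasurableSpace Ω] (μ : Measure Ω) [SigmaFinite μ]
    (L0 : EuclideanSpace ℝ (Fin d) → ℝ) (c C r : ℝ)
    (hc : 0 ≤ c) (hC : 0 < C) (hr : 1 < r)
    (hconv : ConvexOn ℝ Set.univ L0)
    (hgrowth : ∀ γ : EuclideanSpace ℝ (Fin d),
      -c + (1 / C) * ‖γ‖ ^ r ≤ L0 γ ∧ L0 γ ≤ c + C * ‖γ‖ ^ r)
    (m : Ω → ℝ) (w : Ω → EuclideanSpace ℝ (Fin d))
    (hm : Measurable m) (hw : Measurable w)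
    (hmint : Integrable m μ) (hwint : Integrable w μ)
    (hfin_ae : ∀ᵐ ω ∂μ, Lpersp d L0 (m ω) (w ω) ≠ ⊤)
    (hfin_int : Integrable (fun ω => (Lpersp d L0 (m ω) (w ω)).toReal) μ) :
    (∀ᵐ ω ∂μ, 0 ≤ m ω) ∧
    (∀ᵐ ω ∂μ, m ω = 0 → w ω = 0) ∧
    ∃ γ : Ω → EuclideanSpace ℝ (Fin d), Measurable γ ∧
      (∀ᵐ ω ∂μ, w ω = m ω • γ ω) ∧
      ∫⁻ ω, ENNReal.ofReal (m ω * ‖γ ω‖ ^ r) ∂μ < ⊤ := by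
  have key : ∀ᵐ ω ∂μ, (0 < m ω ∧ (Lpersp d L0 (m ω) (w ω)).toReal
      = m ω * L0 ((m ω)⁻¹ • w ω)) ∨ (m ω = 0 ∧ w ω = 0) := by
    filter_upwards [hfin_ae] with ω h
    by_cases h1 : 0 < m ω
    · exact Or.inl ⟨h1, by simp only [Lpersp, if_pos h1, EReal.toReal_coe]⟩
    · by_cases h2 : m ω = 0 ∧ w ω = 0
      · exact Or.inr h2
      · exact absurd (by simp only [Lpersp, if_neg h1, if_neg h2]) h
  refine ⟨?_, ?_, fun ω => (m ω)⁻¹ • w ω, hm.inv.smul hw, ?_, ?_⟩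
  · filter_upwards [key] with ω h
    rcases h with h | h
    · exact h.1.le
    · exact h.1.ge
  · filter_upwards [key] with ω h h0
    rcases h with h | h
    · exact absurd h0 h.1.ne'
    · exact h.2
  · filter_upwards [key] with ω h
    rcases h with h | h
    · rw [smul_inv_smul₀ h.1.ne']
    · simp [h.1, h.2]
  · have hdom : Integrable
        (fun ω => C * ((Lpersp d L0 (m ω) (w ω)).toReal + c * m ω)) μ :=
      (hfin_int.add (hmint.const_mul c)).const_mul C
    refine lt_of_le_of_lt (lintegral_mono_ae ?_) hdom.lintegral_lt_top
    filter_upwards [key] with ω h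
    apply ENNReal.ofReal_le_ofReal
    rcases h with ⟨hpos, hL⟩ | ⟨h0, hw0⟩
    · rw [hL]
      have hg := (hgrowth ((m ω)⁻¹ • w ω)).1
      have hle : ‖(m ω)⁻¹ • w ω‖ ^ r ≤ C * (L0 ((m ω)⁻¹ • w ω) + c) := by
        rw [← div_le_iff₀' hC, div_eq_inv_mul, ← one_div]
        linarith
      calc m ω * ‖(m ω)⁻¹ • w ω‖ ^ r
          ≤ m ω * (C * (L0 ((m ω)⁻¹ • w ω) + c)) := by gcongr
        _ = C * (m ω * L0 ((m ω)⁻¹ • w ω) + c * m ω) := by ring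
    · simp [Lpersp, h0, hw0]
end
end
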